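/- Let w be a Kreweras word of length 3n. Then for every j ∈ {1,…,3n}, w_{σ_w(j)} = A if and only if σ_w(j) < j; equivalently, {i ∈ [3n] : w_i = A} = {i ∈ [3n] : σ_w^{-1}(i) > i} and {i ∈ [3n] : w_i ∈ {B,C}} = {i ∈ [3n] : σ_w^{-1}(i) < i}. In particular, σ_w has no fixed points. -/

import Mathlib

/-- The three letters of a Kreweras word. -/
inductive KLetter : Type
  | A | B | C
deriving DecidableEq, Repr

open KLetter

/-- `w` is a Kreweras word of length `3 * n`: it has `n` `A`'s, `n` `B`'s, `n` `C`'s,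
and every prefix has at least as many `A`'s as `B`'s and at least as many `A`'s as `C`'s. -/
def IsKrewerasWord (n : ℕ) (w : List KLetter) : Prop :=
  w.length = 3 * n ∧ w.count A = n ∧ w.count B = n ∧ w.count C = n ∧
  ∀ k : ℕ, (w.take k).count B ≤ (w.take k).count A ∧
           (w.take k).count C ≤ (w.take k).count A

/-- `kiota w` is the smallest index `ι ≥ 1` (1-indexed) such that the prefix of
length `ι` of `w` has equally many `A`'s as `B`'s, or equally many `A`'s as `C`'s
(and `0` if no such index exists). -/
def kiota (w : List KLetter) : ℕ :=
  (((List.range (w.length + 1)).filter fun k =>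
      decide (1 ≤ k) &&
      (((w.take k).count A == (w.take k).count B) ||
       ((w.take k).count A == (w.take k).count C))).headD 0)

/-- Promotion of a Kreweras word:
`pro w = (w₂, …, w_{ι-1}, A, w_{ι+1}, …, w_{3n}, w_ι)` where `ι = kiota w`. -/
def pro (w : List KLetter) : List KLetter :=
  ((w.drop 1).set (kiota w - 2) A) ++ [w.getD (kiota w - 1) A]

/-- The trip permutation `σ_w` of a Kreweras word of length `3 * n`, as a function on
1-indexed positions: `σ_w i` is the unique element of `{1, …, 3n}` congruent to
`kiota (pro^[i-1] w) + i - 1` modulo `3 * n`. -/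
def ksigma (n : ℕ) (w : List KLetter) (i : ℕ) : ℕ :=
  (kiota (pro^[i - 1] w) + i - 2) % (3 * n) + 1

/-- `keps w i` is the letter of `pro^[i-1] w` in (1-indexed) position `kiota (pro^[i-1] w)`. -/
def keps (w : List KLetter) (i : ℕ) : KLetter :=
  (pro^[i - 1] w).getD (kiota (pro^[i - 1] w) - 1) A

/-- The negation swapping `B` and `C` (and fixing `A`). -/
def negL : KLetter → KLetter
  | A => A
  | B => C
  | C => B

open Classical in
/-- The involution `τ_i` on Kreweras words of length `3 * n`: swap the letters in
(1-indexed) positions `i` and `i + 1` if the result is again a Kreweras word,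
and otherwise do nothing. -/
noncomputable def tau (n i : ℕ) (w : List KLetter) : List KLetter :=
  let w' := (w.set (i - 1) (w.getD i A)).set i (w.getD (i - 1) A)
  if IsKrewerasWord n w' then w' else w

/-- `tauDown n j = τ_j ∘ τ_{j-1} ∘ ⋯ ∘ τ_1`. -/
noncomputable def tauDown (n : ℕ) : ℕ → List KLetter → List KLetter
  | 0, w => w
  | j + 1, w => tau n (j + 1) (tauDown n j w)

/-- `evacAux n j = (tauDown n 1) ∘ (tauDown n 2) ∘ ⋯ ∘ (tauDown n j)`. -/
noncomputable def evacAux (n : ℕ) : ℕ → List KLetter → List KLetter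
  | 0, w => w
  | j + 1, w => evacAux n j (tauDown n (j + 1) w)

/-- Evacuation on Kreweras words of length `3 * n`:
`evac = (τ_1) ∘ (τ_2 ∘ τ_1) ∘ ⋯ ∘ (τ_{3n-1} ∘ ⋯ ∘ τ_2 ∘ τ_1)`. -/
noncomputable def evac (n : ℕ) (w : List KLetter) : List KLetter :=
  evacAux n (3 * n - 1) w

/-- `tauAsc n k c = τ_{k+c-1} ∘ ⋯ ∘ τ_{k+1} ∘ τ_k`. -/
noncomputable def tauAsc (n k : ℕ) : ℕ → List KLetter → List KLetter
  | 0, w => w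
  | j + 1, w => tau n (k + j) (tauAsc n k j w)

/-- `evacStarAux n j = (tauAsc n 1 (3n-1)) ∘ (tauAsc n 2 (3n-2)) ∘ ⋯ ∘ (tauAsc n j (3n-j))`. -/
noncomputable def evacStarAux (n : ℕ) : ℕ → List KLetter → List KLetter
  | 0, w => w
  | j + 1, w => evacStarAux n j (tauAsc n (j + 1) (3 * n - (j + 1)) w)

/-- Dual evacuation on Kreweras words of length `3 * n`:
`evac* = (τ_{3n-1} ∘ ⋯ ∘ τ_1) ∘ (τ_{3n-1} ∘ ⋯ ∘ τ_2) ∘ ⋯ ∘ (τ_{3n-1})`. -/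
noncomputable def evacStar (n : ℕ) (w : List KLetter) : List KLetter :=
  evacStarAux n (3 * n - 1) w

/-- The three-element "V"-shaped poset: `a < b`, `a < c`, with `b`, `c` incomparable. -/
inductive VP : Type
  | a | b | c
deriving DecidableEq

instance : PartialOrder VP where
  le x y := x = y ∨ x = VP.a
  le_refl x := Or.inl rfl
  le_trans x y z hxy hyz := by
    rcases hxy with rfl | rfl
    · exact hyz
    · exact Or.inr rfl
  le_antisymm x y hxy hyx := by
    rcases hxy with rfl | rfl
    · rfl
    · rcases hyx with rfl | rfl <;> rfl

/-- The labeling of elements of `V(n) = VP × Fin n` by letters. -/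
def vlabel {n : ℕ} (p : VP × Fin n) : KLetter :=
  match p.1 with
  | VP.a => A
  | VP.b => B
  | VP.c => C

/-- `L` is a linear extension of `V(n) = VP × Fin n` (with the product order):
a list of all elements of `V(n)`, each appearing once, such that `L_i ≤ L_j`
implies `i ≤ j`. -/
def IsLinearExtension (n : ℕ) (L : List (VP × Fin n)) : Prop :=
  L.Nodup ∧ (∀ p : VP × Fin n, p ∈ L) ∧
  ∀ i j : Fin L.length, L.get i ≤ L.get j → (i : ℕ) ≤ (j : ℕ)

/-- A connected Kreweras word: a Kreweras word of length `3 * n` having no proper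
nonempty consecutive substring which is itself a Kreweras word. -/
def ConnectedKrewerasWord (n : ℕ) (w : List KLetter) : Prop :=
  IsKrewerasWord n w ∧
  ∀ (u : List KLetter) (m : ℕ), u <:+: w → u ≠ [] → u ≠ w → ¬ IsKrewerasWord m u

/-!
Place `pro^[t] w` on the positions `t + 1, …, t + 3n`, as row `t` of a strip. Passing to the next
row removes the initial `A`, turns the letter in one position `b t` from `B` or `C` into `A`, and
appends the old letter in position `t + 3n + 1`; moreover `b t ≡ σ_w(t + 1)` modulo `3n`. A
position is `A` when it comes first, and once it is `A` it remains so. Hence every position of row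
`0` holding a `B` or `C` is bumped before it comes first, and no position is bumped twice.

The key point is the periodicity `b (t + 3n) = b t + 3n`. In the bump diagram of each row, follow
the trip from the position `t + 3n + 1`. It ends at `b t` in row `t + 1`, where that position was
just appended, and at `b (t + 3n)` in row `t + 3n`, where that position comes first. In between,
promotion leaves the end of the trip alone, except that an end in the removed position reappears
in the appended one, `3n` further on.

If now `b t ≤ 3n`, then `σ_w(t + 1) = b t > t + 1` holds a `B` or `C` in row `t`, hence in row
`0`. If `b t = s + 3n`, then `σ_w(t + 1) = s < t + 1`, and `w_s ≠ A` would give `s = b t'`, so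
that `b t = b (t' + 3n)` and `t = t' + 3n ≥ 3n`.
-/

namespace BumpDiagram

/-- The leftward leg of level `j` of the trip starting at `s`, where the height `P` drops, goes
through: at `k` the height `Q` is below `Q s - j` before `P` has come back down to `P s - j`. -/
def LeftPass (P Q : ℕ → ℤ) (s j k : ℕ) : Prop :=
  k < s ∧ Q k < Q s - j ∧ ∀ m, k < m → m < s → P s - j < P m

/-- The rightward leg of level `j` of the trip starting at `s` goes through: at `k` the height `P`
is below `P s - j` while `Q` has not yet fallen below `Q s - j`. -/
def RightPass (P Q : ℕ → ℤ) (s j k : ℕ) : Prop :=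
  s < k ∧ P k < P s - j ∧ ∀ m, s < m → m ≤ k → Q s - j ≤ Q m

/-- The leftward leg of level `j` of the trip starting at `s` stops at `a`: `P` is back at
`P s - j` while `Q` has stayed at `Q s - j` or above. The trip then ends at the letter `a + 1`. -/
def LeftEnd (P Q : ℕ → ℤ) (s j a : ℕ) : Prop :=
  a < s ∧ P a ≤ P s - j ∧ (∀ m, a < m → m < s → P s - j < P m) ∧
    ∀ m, a ≤ m → m < s → Q s - j ≤ Q m

/-- The rightward leg of level `j` of the trip starting at `s` stops at `e`: `Q` falls below
`Q s - j` while `P` has stayed at `P s - j` or above. The trip then ends at the letter `e`. -/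
def RightEnd (P Q : ℕ → ℤ) (s j e : ℕ) : Prop :=
  s < e ∧ Q e < Q s - j ∧ (∀ m, s < m → m < e → Q s - j ≤ Q m) ∧
    ∀ m, s < m → m ≤ e → P s - j ≤ P m

/-- Both legs of level `j` of the trip starting at `s` go through within the window `[lo, hi]`. -/
def CrossesLevel (lo hi : ℕ) (P Q : ℕ → ℤ) (s j : ℕ) : Prop :=
  (∃ k, lo ≤ k ∧ LeftPass P Q s j k) ∧ ∃ k ≤ hi, RightPass P Q s j k

/-- The trip of a bump diagram on the window `[lo, hi]` that starts at a letter `s` where `P` drops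
and ends at `e`. It is a staircase, whose legs alternate left and right and are taken level by level
in the order left `0`, right `0`, left `1`, right `1`, …, until one of them does not go through. -/
def CloserTrip (lo hi : ℕ) (P Q : ℕ → ℤ) (s e : ℕ) : Prop :=
  ∃ i, (∀ j < i, CrossesLevel lo hi P Q s j) ∧
    ((∃ a, lo ≤ a ∧ LeftEnd P Q s i a ∧ e = a + 1) ∨
      (∃ k, lo ≤ k ∧ LeftPass P Q s i k) ∧ e ≤ hi ∧ RightEnd P Q s i e)

/-- The trip of a bump diagram that starts at a letter `A` in position `s`: it ends at the first
`e ≤ hi` where one of the two heights returns to its value before `s`. -/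
def OpenerTrip (hi : ℕ) (P Q : ℕ → ℤ) (s e : ℕ) : Prop :=
  P s = P (s - 1) + 1 ∧ Q s = Q (s - 1) + 1 ∧ s < e ∧ e ≤ hi ∧
    (P e ≤ P (s - 1) ∨ Q e ≤ Q (s - 1)) ∧
    ∀ m, s ≤ m → m < e → P (s - 1) < P m ∧ Q (s - 1) < Q m

/-- The trip from `s` to `e` in the bump diagram with heights `P` and `Q` on the window `[lo, hi]`.
The letter `s` is read off from the change of the heights between `s - 1` and `s`, so this is only
meaningful for `lo < s`. -/
def Trip (lo hi : ℕ) (P Q : ℕ → ℤ) (s e : ℕ) : Prop :=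
  (P s = P (s - 1) - 1 ∧ Q s = Q (s - 1) ∧ CloserTrip lo hi P Q s e) ∨
    (Q s = Q (s - 1) - 1 ∧ P s = P (s - 1) ∧ CloserTrip lo hi Q P s e) ∨
    OpenerTrip hi P Q s e

theorem OpenerTrip.symm {hi s e : ℕ} {P Q : ℕ → ℤ} (h : OpenerTrip hi P Q s e) :
    OpenerTrip hi Q P s e := by
  grind [OpenerTrip]

theorem Trip.symm {lo hi s e : ℕ} {P Q : ℕ → ℤ} (h : Trip lo hi P Q s e) :
    Trip lo hi Q P s e := by
  rcases h with h | h | h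
  exacts [Or.inr (Or.inl h), Or.inl h, Or.inr (Or.inr h.symm)]

section CrossesLevel
variable {lo hi s i j : ℕ} {P Q : ℕ → ℤ}

theorem CrossesLevel.lt_fst (h : CrossesLevel lo hi P Q s j)
    (hP : ∀ m, s ≤ m → m ≤ hi → 0 ≤ P m) : j < P s := by
  grind [CrossesLevel, RightPass]

theorem CrossesLevel.lt_snd (h : CrossesLevel lo hi P Q s j)
    (hQ : ∀ m, lo ≤ m → m ≤ s → 0 ≤ Q m) : j < Q s := by
  grind [CrossesLevel, LeftPass]

theorem le_fst_of_forall_crossesLevel (h : ∀ j < i, CrossesLevel lo hi P Q s j) (hs : s ≤ hi)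
    (hP : ∀ m, s ≤ m → m ≤ hi → 0 ≤ P m) : i ≤ P s := by
  rcases i with _ | i
  · exact hP s le_rfl hs
  · exact_mod_cast (h i i.lt_succ_self).lt_fst hP

theorem le_snd_of_forall_crossesLevel (h : ∀ j < i, CrossesLevel lo hi P Q s j) (hs : lo ≤ s)
    (hQ : ∀ m, lo ≤ m → m ≤ s → 0 ≤ Q m) : i ≤ Q s := by
  rcases i with _ | i
  · exact hQ s hs le_rfl
  · exact_mod_cast (h i i.lt_succ_self).lt_snd hQ

end CrossesLevel

/-- `U` and `V` are the two heights of a Kreweras word placed on the window `[lo, hi]`, with `U` the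
height that belongs to the letter in the bumped position `ι`, and `U'` and `V'` are the heights of
its promotion, placed on the window `[lo + 1, hi + 1]` so that no letter other than the first one
moves. -/
structure IsPromotionStep (lo hi ι : ℕ) (U V U' V' : ℕ → ℤ) : Prop where
  lo_lt : lo + 1 < ι
  le_hi : ι ≤ hi
  start : U lo = 0 ∧ V lo = 0
  first : U (lo + 1) = 1 ∧ V (lo + 1) = 1
  finish : U hi = 0 ∧ V hi = 0
  nonneg : ∀ m, lo ≤ m → m ≤ hi → 0 ≤ U m ∧ 0 ≤ V m
  pos : ∀ m, lo < m → m < ι → 0 < U m ∧ 0 < V m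
  bump : U (ι - 1) = 1 ∧ U ι = 0 ∧ V ι = V (ι - 1)
  before : ∀ m, lo < m → m < ι → U' m = U m - 1 ∧ V' m = V m - 1
  after : ∀ m, ι ≤ m → m ≤ hi → U' m = U m + 1 ∧ V' m = V m
  finish' : U' (hi + 1) = 0 ∧ V' (hi + 1) = 0

namespace IsPromotionStep
variable {lo hi ι : ℕ} {U V U' V' : ℕ → ℤ} {s e i j k a : ℕ}

theorem openerTrip (S : IsPromotionStep lo hi ι U V U' V') (hs : lo + 1 < s)
    (h : OpenerTrip hi U V s e) : OpenerTrip (hi + 1) U' V' s e := by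
  have := S.before
  have := S.after
  have := S.pos
  have := S.bump
  grind [OpenerTrip]

theorem openerTrip_bump (S : IsPromotionStep lo hi ι U V U' V')
    (h : CloserTrip lo hi U V ι e) : OpenerTrip (hi + 1) U' V' ι e := by
  have := S.before (ι - 1)
  have := S.after
  have := S.pos
  have := S.nonneg
  have := S.bump
  have := S.start
  have := S.lo_lt
  obtain ⟨i, hpass, hend⟩ := h
  obtain rfl : i = 0 := by
    by_contra hi0
    obtain ⟨k, hk, hR⟩ := (hpass 0 (by omega)).2
    grind [RightPass]
  rcases hend with ⟨a, ha, hL, rfl⟩ | ⟨-, he, hR⟩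
  · grind [LeftEnd]
  · grind [OpenerTrip, RightEnd]

theorem closerTrip_appended (S : IsPromotionStep lo hi ι U V U' V') :
    CloserTrip (lo + 1) (hi + 1) U' V' (hi + 1) ι := by
  have := S.before
  have := S.after
  have := S.pos
  have := S.nonneg
  have := S.bump
  have := S.lo_lt
  have := S.le_hi
  have := S.finish'
  refine ⟨0, by simp, Or.inl ⟨ι - 1, by omega, ?_, by omega⟩⟩
  grind [LeftEnd]

section BumpedBefore

theorem leftPass_bumped_of_lt (S : IsPromotionStep lo hi ι U V U' V') (hs : lo + 1 < s)
    (hlt : s < ι) (hj : j < U s) (h : LeftPass U V s j k) :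
    lo + 1 ≤ k ∧ LeftPass U' V' s j k := by
  have := S.first
  have := S.before
  grind [LeftPass]

theorem rightPass_bumped_of_lt (S : IsPromotionStep lo hi ι U V U' V') (hs : lo + 1 < s)
    (hlt : s < ι) (hj : j + 1 < U s) (h : RightPass U V s j k) :
    RightPass U' V' s j (min k (ι - 1)) := by
  have := S.before
  have := S.bump
  grind [RightPass]

theorem crossesLevel_bumped_of_lt (S : IsPromotionStep lo hi ι U V U' V') (hs : lo + 1 < s)
    (hlt : s < ι) (hj : j + 1 < U s) :
    CrossesLevel lo hi U V s j → CrossesLevel (lo + 1) (hi + 1) U' V' s j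
  | ⟨⟨k, _, hL⟩, k', hk', hR⟩ => ⟨⟨k, S.leftPass_bumped_of_lt hs hlt (by omega) hL⟩,
      _, by omega, S.rightPass_bumped_of_lt hs hlt hj hR⟩

theorem leftEnd_bumped_of_lt (S : IsPromotionStep lo hi ι U V U' V') (hs : lo + 1 < s)
    (hlt : s < ι) (hj : j < U s) (h : LeftEnd U V s j a) :
    lo + 1 ≤ a ∧ LeftEnd U' V' s j a := by
  have := S.first
  have := S.before
  grind [LeftEnd]

theorem not_leftEnd_bumped_of_lt (S : IsPromotionStep lo hi ι U V U' V') (hs : lo + 1 < s)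
    (hlt : s < ι) (hj : U s = j + 1) (hL : LeftPass U V s j k) :
    ¬ LeftEnd U V s (j + 1) a := by
  have := S.start
  have := S.pos
  have := (S.leftPass_bumped_of_lt hs hlt (by omega) hL).1
  grind [LeftPass, LeftEnd]

theorem rightEnd_bumped_of_lt (S : IsPromotionStep lo hi ι U V U' V') (hs : lo + 1 < s)
    (hlt : s < ι) (hj : j < U s) (h : RightEnd U V s j e) : RightEnd U' V' s j e := by
  have := S.before
  have := S.bump
  grind [RightEnd]

theorem rightEnd_bumped_pred_of_lt (S : IsPromotionStep lo hi ι U V U' V') (hs : lo + 1 < s)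
    (hlt : s < ι) (hj : U s = j + 1) (hR : RightPass U V s j k) (he : e ≤ hi)
    (h : RightEnd U V s (j + 1) e) : RightEnd U' V' s j e := by
  have := S.before
  have := S.after
  have := S.pos
  have : ι ≤ k := by grind [RightPass]
  have : k < e := by grind [RightPass, RightEnd]
  grind [RightPass, RightEnd]

theorem closerTrip_bumped_of_lt (S : IsPromotionStep lo hi ι U V U' V') (hs : lo + 1 < s)
    (hlt : s < ι) : CloserTrip lo hi U V s e → CloserTrip (lo + 1) (hi + 1) U' V' s e := by
  rintro ⟨i, hcross, hend⟩
  have := S.le_hi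
  have hpos := (S.pos s (by omega) hlt).1
  have hle : i ≤ U s :=
    le_fst_of_forall_crossesLevel hcross (by omega) fun m _ _ ↦
      (S.nonneg m (by omega) (by omega)).1
  have hcross' : ∀ j < i, j + 1 < U s → CrossesLevel (lo + 1) (hi + 1) U' V' s j :=
    fun j hj hjs ↦ S.crossesLevel_bumped_of_lt hs hlt hjs (hcross j hj)
  rcases hle.lt_or_eq with hlev | hlev
  · refine ⟨i, fun j hj ↦ hcross' j hj (by omega), hend.imp ?_ ?_⟩
    · rintro ⟨a, -, hE, rfl⟩
      have ⟨ha, hE'⟩ := S.leftEnd_bumped_of_lt hs hlt hlev hE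
      exact ⟨a, ha, hE', rfl⟩
    · rintro ⟨⟨k, -, hL⟩, he, hE⟩
      exact ⟨⟨k, S.leftPass_bumped_of_lt hs hlt hlev hL⟩, by omega,
        S.rightEnd_bumped_of_lt hs hlt hlev hE⟩
  · obtain ⟨u, rfl⟩ : ∃ u, i = u + 1 := ⟨i - 1, by omega⟩
    obtain ⟨⟨k, -, hL⟩, k', -, hR⟩ := hcross u (by omega)
    have hu : U s = u + 1 := by omega
    rcases hend with ⟨a, -, hE, -⟩ | ⟨-, he, hE⟩
    · exact absurd hE (S.not_leftEnd_bumped_of_lt hs hlt hu hL)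
    · exact ⟨u, fun j hj ↦ hcross' j (by omega) (by omega), Or.inr
        ⟨⟨k, S.leftPass_bumped_of_lt hs hlt (by omega) hL⟩, by omega,
          S.rightEnd_bumped_pred_of_lt hs hlt hu hR he hE⟩⟩

end BumpedBefore

section OtherBefore

theorem leftPass_other_of_lt (S : IsPromotionStep lo hi ι U V U' V') (hs : lo + 1 < s)
    (hlt : s < ι) (hj : j < V s) (h : LeftPass V U s j k) :
    lo + 1 ≤ k ∧ LeftPass V' U' s j k := by
  have := S.first
  have := S.before
  grind [LeftPass]

theorem succ_lt_of_leftPass_other (S : IsPromotionStep lo hi ι U V U' V') (hs : lo + 1 < s)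
    (hlt : s < ι) (hj : j < V s) (h : LeftPass V U s j k) : j + 1 < U s := by
  have := S.first
  have := S.pos k
  grind [LeftPass]

theorem rightPass_other_of_lt (S : IsPromotionStep lo hi ι U V U' V') (hs : lo + 1 < s)
    (hlt : s < ι) (hj : j < U s) (h : RightPass V U s j k) : RightPass V' U' s j k := by
  have := S.before
  have := S.bump
  grind [RightPass]

theorem level_lt_other_of_lt (S : IsPromotionStep lo hi ι U V U' V') (hs : lo + 1 < s)
    (hlt : s < ι) (hcross : ∀ j < i, CrossesLevel lo hi V U s j) : i < V s := by
  have := S.le_hi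
  have hpos := S.pos s (by omega) hlt
  obtain ⟨v, hv⟩ : ∃ v : ℕ, V s = v + 1 := ⟨(V s - 1).toNat, by omega⟩
  by_contra! hvi
  have hvu : v < U s :=
    (hcross v (by omega)).lt_snd fun m _ _ ↦ (S.nonneg m (by omega) (by omega)).1
  obtain ⟨-, k, -, hR⟩ := hcross v (by omega)
  have := S.pos k
  have := S.bump
  grind [RightPass]

theorem crossesLevel_other_of_lt (S : IsPromotionStep lo hi ι U V U' V') (hs : lo + 1 < s)
    (hlt : s < ι) (hj : j < V s) :
    CrossesLevel lo hi V U s j → CrossesLevel (lo + 1) (hi + 1) V' U' s j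
  | ⟨⟨k, _, hL⟩, k', hk', hR⟩ => ⟨⟨k, S.leftPass_other_of_lt hs hlt hj hL⟩,
      k', by omega, S.rightPass_other_of_lt hs hlt
        (by linarith [S.succ_lt_of_leftPass_other hs hlt hj hL]) hR⟩

theorem leftEnd_other_of_lt (S : IsPromotionStep lo hi ι U V U' V') (hs : lo + 1 < s)
    (hlt : s < ι) (hj : j < V s) (h : LeftEnd V U s j a) :
    lo + 1 ≤ a ∧ LeftEnd V' U' s j a := by
  have := S.first
  have := S.before
  grind [LeftEnd]

theorem rightEnd_other_of_lt (S : IsPromotionStep lo hi ι U V U' V') (hs : lo + 1 < s)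
    (hlt : s < ι) (hj : j + 1 < U s) (h : RightEnd V U s j e) : RightEnd V' U' s j e := by
  have := S.before
  have := S.bump
  grind [RightEnd]

theorem closerTrip_other_of_lt (S : IsPromotionStep lo hi ι U V U' V') (hs : lo + 1 < s)
    (hlt : s < ι) : CloserTrip lo hi V U s e → CloserTrip (lo + 1) (hi + 1) V' U' s e := by
  rintro ⟨i, hcross, hend⟩
  have hlev := S.level_lt_other_of_lt hs hlt hcross
  refine ⟨i, fun j hj ↦ S.crossesLevel_other_of_lt hs hlt (by omega) (hcross j hj),
    hend.imp ?_ ?_⟩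
  · rintro ⟨a, -, hE, rfl⟩
    have ⟨ha, hE'⟩ := S.leftEnd_other_of_lt hs hlt hlev hE
    exact ⟨a, ha, hE', rfl⟩
  · rintro ⟨⟨k, -, hL⟩, he, hE⟩
    exact ⟨⟨k, S.leftPass_other_of_lt hs hlt hlev hL⟩, by omega,
      S.rightEnd_other_of_lt hs hlt (S.succ_lt_of_leftPass_other hs hlt hlev hL) hE⟩

end OtherBefore

section BumpedAfter

theorem leftPass_bumped_of_gt (S : IsPromotionStep lo hi ι U V U' V') (hlt : ι < s)
    (hs : s ≤ hi) (hj : j ≤ U s) (h : LeftPass U V s j k) :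
    lo + 1 ≤ k ∧ LeftPass U' V' s j k := by
  have := S.lo_lt
  have := S.after
  have := S.bump
  have : ι ≤ k := by grind [LeftPass]
  grind [LeftPass]

theorem rightPass_bumped_of_gt (S : IsPromotionStep lo hi ι U V U' V') (hlt : ι < s)
    (hk : k ≤ hi) (h : RightPass U V s j k) : RightPass U' V' s j k := by
  have := S.after
  grind [RightPass]

theorem crossesLevel_bumped_of_gt (S : IsPromotionStep lo hi ι U V U' V') (hlt : ι < s)
    (hs : s ≤ hi) (hj : j ≤ U s) :
    CrossesLevel lo hi U V s j → CrossesLevel (lo + 1) (hi + 1) U' V' s j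
  | ⟨⟨k, _, hL⟩, k', hk', hR⟩ => ⟨⟨k, S.leftPass_bumped_of_gt hlt hs hj hL⟩,
      k', by omega, S.rightPass_bumped_of_gt hlt hk' hR⟩

theorem leftEnd_bumped_of_gt (S : IsPromotionStep lo hi ι U V U' V') (hlt : ι < s)
    (hs : s ≤ hi) (hj : j ≤ U s) (h : LeftEnd U V s j a) :
    lo + 1 ≤ a ∧ LeftEnd U' V' s j a := by
  have := S.lo_lt
  have := S.after
  have := S.bump
  have : ι ≤ a := by grind [LeftEnd]
  grind [LeftEnd]

theorem rightEnd_bumped_of_gt (S : IsPromotionStep lo hi ι U V U' V') (hlt : ι < s)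
    (he : e ≤ hi) (h : RightEnd U V s j e) : RightEnd U' V' s j e := by
  have := S.after
  grind [RightEnd]

theorem closerTrip_bumped_of_gt (S : IsPromotionStep lo hi ι U V U' V') (hlt : ι < s)
    (hs : s ≤ hi) : CloserTrip lo hi U V s e → CloserTrip (lo + 1) (hi + 1) U' V' s e := by
  rintro ⟨i, hcross, hend⟩
  have := S.lo_lt
  have hlev := le_fst_of_forall_crossesLevel hcross hs fun m _ _ ↦
    (S.nonneg m (by omega) (by omega)).1
  refine ⟨i, fun j hj ↦ S.crossesLevel_bumped_of_gt hlt hs (by omega) (hcross j hj),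
    hend.imp ?_ ?_⟩
  · rintro ⟨a, -, hE, rfl⟩
    have ⟨ha, hE'⟩ := S.leftEnd_bumped_of_gt hlt hs hlev hE
    exact ⟨a, ha, hE', rfl⟩
  · rintro ⟨⟨k, -, hL⟩, he, hE⟩
    exact ⟨⟨k, S.leftPass_bumped_of_gt hlt hs hlev hL⟩, by omega,
      S.rightEnd_bumped_of_gt hlt he hE⟩

end BumpedAfter

section OtherAfter

theorem leftPass_other_of_gt (S : IsPromotionStep lo hi ι U V U' V') (hlt : ι < s)
    (hs : s ≤ hi) (hk : lo ≤ k) (h : LeftPass V U s j k) :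
    lo + 1 ≤ max k ι ∧ LeftPass V' U' s j (max k ι) := by
  have := S.lo_lt
  have := S.after
  have := S.bump
  have := S.nonneg
  grind [LeftPass]

theorem rightPass_other_of_gt (S : IsPromotionStep lo hi ι U V U' V') (hlt : ι < s)
    (hk : k ≤ hi) (h : RightPass V U s j k) : RightPass V' U' s j k := by
  have := S.after
  grind [RightPass]

theorem crossesLevel_other_of_gt (S : IsPromotionStep lo hi ι U V U' V') (hlt : ι < s)
    (hs : s ≤ hi) : CrossesLevel lo hi V U s j → CrossesLevel (lo + 1) (hi + 1) V' U' s j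
  | ⟨⟨_, hk, hL⟩, k', hk', hR⟩ => ⟨⟨_, S.leftPass_other_of_gt hlt hs hk hL⟩,
      k', by omega, S.rightPass_other_of_gt hlt hk' hR⟩

theorem leftEnd_other_of_gt (S : IsPromotionStep lo hi ι U V U' V')
    (hs : s ≤ hi) (ha : ι ≤ a) (h : LeftEnd V U s j a) : LeftEnd V' U' s j a := by
  have := S.after
  grind [LeftEnd]

theorem rightEnd_other_of_gt (S : IsPromotionStep lo hi ι U V U' V') (hlt : ι < s)
    (he : e ≤ hi) (h : RightEnd V U s j e) : RightEnd V' U' s j e := by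
  have := S.after
  grind [RightEnd]

theorem level_eq_of_leftEnd_other (S : IsPromotionStep lo hi ι U V U' V') (hlt : ι < s)
    (hs : s ≤ hi) (hcross : ∀ j < i, CrossesLevel lo hi V U s j) (ha : a < ι)
    (h : LeftEnd V U s i a) : U s = i := by
  have := S.lo_lt
  have := le_snd_of_forall_crossesLevel hcross (by omega) fun m _ _ ↦
    (S.nonneg m (by omega) (by omega)).1
  have := S.bump
  grind [LeftEnd]

theorem leftPass_other_of_leftEnd (S : IsPromotionStep lo hi ι U V U' V') (hlt : ι < s)
    (hs : s ≤ hi) (hus : U s = i) (ha : a < ι) (h : LeftEnd V U s i a) :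
    lo + 1 ≤ ι - 1 ∧ LeftPass V' U' s i (ι - 1) := by
  have := S.lo_lt
  have := S.before
  have := S.after
  have := S.bump
  grind [LeftEnd, LeftPass]

theorem rightPass_other_finish (S : IsPromotionStep lo hi ι U V U' V') (hlt : ι < s)
    (hs : s ≤ hi) (hus : U s = i) (hv : U s < V s) : RightPass V' U' s i hi := by
  have := S.lo_lt
  have := S.nonneg
  have := S.after
  have := S.finish
  grind [RightPass]

theorem leftEnd_other_succ_of_gt (S : IsPromotionStep lo hi ι U V U' V') (hlt : ι < s)
    (hs : s ≤ hi) (hus : U s = i) (hv : U s < V s) (ha : a < ι)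
    (h : LeftEnd V U s i a) : lo + 1 ≤ a ∧ LeftEnd V' U' s (i + 1) a := by
  have := S.lo_lt
  have : lo + 1 ≤ a := by
    have := S.first
    grind [LeftEnd]
  have := S.pos
  have := S.before
  have := S.after
  grind [LeftEnd]

theorem rightEnd_other_appended (S : IsPromotionStep lo hi ι U V U' V') (hlt : ι < s)
    (hs : s ≤ hi) (hus : U s = i) (hvs : V s = i) : RightEnd V' U' s i (hi + 1) := by
  have := S.lo_lt
  have := S.nonneg
  have := S.after
  have := S.finish'
  grind [RightEnd]

theorem closerTrip_other_of_leftEnd (S : IsPromotionStep lo hi ι U V U' V') (hlt : ι < s)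
    (hs : s ≤ hi) (hcross : ∀ j < i, CrossesLevel lo hi V U s j) (ha : a < ι) (hlo : lo ≤ a)
    (hE : LeftEnd V U s i a) :
    CloserTrip (lo + 1) (hi + 1) V' U' s (a + 1) ∨
      a = lo ∧ CloserTrip (lo + 1) (hi + 1) V' U' s (hi + 1) := by
  have hus := S.level_eq_of_leftEnd_other hlt hs hcross ha hE
  have hcross' : ∀ j < i, CrossesLevel (lo + 1) (hi + 1) V' U' s j :=
    fun j hj ↦ S.crossesLevel_other_of_gt hlt hs (hcross j hj)
  have hL := S.leftPass_other_of_leftEnd hlt hs hus ha hE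
  have hle := le_fst_of_forall_crossesLevel hcross hs fun m _ _ ↦
    (S.nonneg m (by omega) (by omega)).2
  rcases hle.lt_or_eq with hv | hvs
  · obtain ⟨ha', hE'⟩ := S.leftEnd_other_succ_of_gt hlt hs hus (by omega) ha hE
    have hR := S.rightPass_other_finish hlt hs hus (by omega)
    refine Or.inl ⟨i + 1, fun j hj ↦ ?_, Or.inl ⟨a, ha', hE', rfl⟩⟩
    rcases Nat.lt_succ_iff_lt_or_eq.1 hj with hj | rfl
    exacts [hcross' j hj, ⟨⟨_, hL⟩, hi, by omega, hR⟩]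
  · have : a = lo := by
      have := S.pos a
      grind [LeftEnd]
    exact Or.inr ⟨this, i, hcross', Or.inr
      ⟨⟨_, hL⟩, le_rfl, S.rightEnd_other_appended hlt hs hus hvs.symm⟩⟩

theorem closerTrip_other_of_gt (S : IsPromotionStep lo hi ι U V U' V') (hlt : ι < s)
    (hs : s ≤ hi) (h : CloserTrip lo hi V U s e) :
    CloserTrip (lo + 1) (hi + 1) V' U' s e ∨
      e = lo + 1 ∧ CloserTrip (lo + 1) (hi + 1) V' U' s (hi + 1) := by
  obtain ⟨i, hcross, hend⟩ := h
  have hcross' : ∀ j < i, CrossesLevel (lo + 1) (hi + 1) V' U' s j :=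
    fun j hj ↦ S.crossesLevel_other_of_gt hlt hs (hcross j hj)
  rcases hend with ⟨a, ha, hE, rfl⟩ | ⟨⟨k, hk, hL⟩, he, hE⟩
  · rcases lt_or_ge a ι with haι | haι
    · simpa using S.closerTrip_other_of_leftEnd hlt hs hcross haι ha hE
    · have := S.lo_lt
      exact Or.inl ⟨i, hcross', Or.inl
        ⟨a, by omega, S.leftEnd_other_of_gt hs haι hE, rfl⟩⟩
  · exact Or.inl ⟨i, hcross', Or.inr ⟨⟨_, S.leftPass_other_of_gt hlt hs hk hL⟩, by omega,
      S.rightEnd_other_of_gt hlt he hE⟩⟩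

end OtherAfter

theorem trip (S : IsPromotionStep lo hi ι U V U' V') (hlo : lo + 1 < s) (hs : s ≤ hi)
    (h : Trip lo hi U V s e) :
    ∃ e', Trip (lo + 1) (hi + 1) U' V' s e' ∧ (e' = e ∨ e = lo + 1 ∧ e' = hi + 1) := by
  have := S.before s
  have := S.before (s - 1)
  have := S.after s
  have := S.after (s - 1)
  have := S.bump
  rcases h with ⟨hu, hv, h⟩ | ⟨hv, hu, h⟩ | h
  · rcases lt_trichotomy s ι with hsι | rfl | hsι
    · exact ⟨e, Or.inl ⟨by omega, by omega, S.closerTrip_bumped_of_lt hlo hsι h⟩, Or.inl rfl⟩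
    · exact ⟨e, Or.inr (Or.inr (S.openerTrip_bump h)), Or.inl rfl⟩
    · exact ⟨e, Or.inl ⟨by omega, by omega, S.closerTrip_bumped_of_gt hsι hs h⟩, Or.inl rfl⟩
  · rcases lt_trichotomy s ι with hsι | rfl | hsι
    · exact ⟨e, Or.inr (Or.inl ⟨by omega, by omega, S.closerTrip_other_of_lt hlo hsι h⟩),
        Or.inl rfl⟩
    · omega
    · rcases S.closerTrip_other_of_gt hsι hs h with h | ⟨he, h⟩
      · exact ⟨e, Or.inr (Or.inl ⟨by omega, by omega, h⟩), Or.inl rfl⟩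
      · exact ⟨hi + 1, Or.inr (Or.inl ⟨by omega, by omega, h⟩), Or.inr ⟨he, rfl⟩⟩
  · exact ⟨e, Or.inr (Or.inr (S.openerTrip hlo h)), Or.inl rfl⟩

theorem eq_bump_of_trip_first (S : IsPromotionStep lo hi ι U V U' V')
    (h : Trip lo hi U V (lo + 1) e) : e = ι := by
  have := S.start
  have := S.first
  have := S.pos e
  have := S.bump
  have := S.lo_lt
  have : OpenerTrip hi U V (lo + 1) e := by grind [Trip]
  grind [OpenerTrip]

theorem trip_appended (S : IsPromotionStep lo hi ι U V U' V') :
    Trip (lo + 1) (hi + 1) U' V' (hi + 1) ι := by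
  have := S.after hi S.le_hi le_rfl
  have := S.finish
  have := S.finish'
  refine Or.inl ⟨?_, ?_, S.closerTrip_appended⟩ <;> rw [Nat.add_sub_cancel] <;> omega

theorem shift (S : IsPromotionStep lo hi ι U V U' V') (t : ℕ) :
    IsPromotionStep (t + lo) (t + hi) (t + ι) (fun m ↦ U (m - t)) (fun m ↦ V (m - t))
      (fun m ↦ U' (m - t)) (fun m ↦ V' (m - t)) := by
  have hsub : ∀ a, t + a - t = a := Nat.add_sub_cancel_left t
  have hpred : t + ι - 1 - t = ι - 1 := by omega
  exact
  { lo_lt := by have := S.lo_lt; omega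
    le_hi := by have := S.le_hi; omega
    start := by simpa only [hsub] using S.start
    first := by simpa only [add_assoc, hsub] using S.first
    finish := by simpa only [hsub] using S.finish
    nonneg := fun m _ _ ↦ S.nonneg (m - t) (by omega) (by omega)
    pos := fun m _ _ ↦ S.pos (m - t) (by omega) (by omega)
    bump := by simpa only [hsub, hpred] using S.bump
    before := fun m _ _ ↦ S.before (m - t) (by omega) (by omega)
    after := fun m _ _ ↦ S.after (m - t) (by omega) (by omega)
    finish' := by simpa only [add_assoc, hsub] using S.finish' }

end IsPromotionStep

end BumpDiagram

/-- The height of `w` after `k` letters with respect to `X`: the excess of the number of `A`'s over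
the number of `X`'s. The Kreweras condition is that both heights stay nonnegative. -/
def letterHeight (X : KLetter) (w : List KLetter) (k : ℕ) : ℤ :=
  (w.take k).count A - (w.take k).count X

/-- The change of the height with respect to `X` caused by reading the letter `l`. -/
def letterStep (X l : KLetter) : ℤ := (if l = A then 1 else 0) - if l = X then 1 else 0

section Height
variable {X Y : KLetter} {w : List KLetter} {n k : ℕ}

@[simp]
theorem letterHeight_zero : letterHeight X w 0 = 0 := by
  simp [letterHeight]

theorem letterHeight_succ (hk : k < w.length) :
    letterHeight X w (k + 1) = letterHeight X w k + letterStep X (w.getD k A) := by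
  rw [letterHeight, letterHeight, letterStep, List.take_add_one, List.getElem?_eq_getElem hk,
    List.getD_eq_getElem _ _ hk]
  simp only [Option.toList_some, List.count_append, List.count_singleton, beq_iff_eq]
  split_ifs <;> push_cast <;> ring

theorem letterHeight_of_length_le (hk : w.length ≤ k) :
    letterHeight X w k = letterHeight X w w.length := by
  simp [letterHeight, List.take_of_length_le hk]

theorem letterStep_A (hX : X ≠ A) : letterStep X A = 1 := by
  simp [letterStep, hX.symm]

theorem letterStep_self (hX : X ≠ A) : letterStep X X = -1 := by
  simp [letterStep, hX]

theorem letterStep_negL : letterStep (negL X) X = 0 := by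
  cases X <;> simp [letterStep, negL]

theorem negL_ne_A (hX : X ≠ A) : negL X ≠ A := by
  cases X <;> simp_all [negL]

theorem letterStep_nonpos (hX : X ≠ A) : letterStep Y X ≤ 0 := by
  rw [letterStep, if_neg hX]
  split_ifs <;> norm_num

theorem length_eq_count_A_add_count_B_add_count_C (w : List KLetter) :
    w.length = w.count A + w.count B + w.count C := by
  induction w with
  | nil => rfl
  | cons l w ih => cases l <;> simp [ih] <;> omega

theorem isKrewerasWord_iff_letterHeight :
    IsKrewerasWord n w ↔ w.length = 3 * n ∧
      ∀ X ≠ A, (∀ k ≤ 3 * n, 0 ≤ letterHeight X w k) ∧ letterHeight X w (3 * n) = 0 := by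
  have hcount := length_eq_count_A_add_count_B_add_count_C w
  constructor
  · rintro ⟨hlen, hA, hB, -, hpre⟩
    refine ⟨hlen, fun X hX ↦ ?_⟩
    have hX' : X = B ∨ X = C := by cases X <;> simp_all
    refine ⟨fun k _ ↦ ?_, ?_⟩
    · have := hpre k
      rw [letterHeight]
      rcases hX' with rfl | rfl <;> omega
    · rw [letterHeight, ← hlen, List.take_length]
      rcases hX' with rfl | rfl <;> omega
  · rintro ⟨hlen, h⟩
    have hnonneg : ∀ X ≠ A, ∀ k, 0 ≤ letterHeight X w k := fun X hX k ↦ by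
      rcases le_total k (3 * n) with hk | hk
      · exact (h X hX).1 k hk
      · rw [letterHeight_of_length_le (hlen.trans_le hk), hlen, (h X hX).2]
    have hB := (h B (by simp)).2
    have hC := (h C (by simp)).2
    simp only [letterHeight, ← hlen, List.take_length] at hB hC
    refine ⟨hlen, by omega, by omega, by omega, fun k ↦ ?_⟩
    have hBk := hnonneg B (by simp) k
    have hCk := hnonneg C (by simp) k
    simp only [letterHeight] at hBk hCk
    omega

end Height

section FirstReturn
variable {X : KLetter} {w : List KLetter} {n k : ℕ}

namespace IsKrewerasWord

theorem isLeast_kiota (hw : IsKrewerasWord n w) (hn : 0 < n) :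
    IsLeast {k | 1 ≤ k ∧ ∃ X ≠ A, letterHeight X w k = 0} (kiota w) := by
  set p : ℕ → Bool := fun k ↦ decide (1 ≤ k) &&
    (((w.take k).count A == (w.take k).count B) || ((w.take k).count A == (w.take k).count C))
    with hp
  have hpk : ∀ k, p k ↔ 1 ≤ k ∧ ∃ X ≠ A, letterHeight X w k = 0 := fun k ↦ by
    simp only [hp, letterHeight, Bool.and_eq_true, Bool.or_eq_true, decide_eq_true_eq, beq_iff_eq]
    refine and_congr_right fun _ ↦ ⟨?_, ?_⟩
    · rintro (h | h)
      exacts [⟨B, by simp, by omega⟩, ⟨C, by simp, by omega⟩]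
    · rintro ⟨_ | _, hX, h⟩
      all_goals first | omega | exact absurd rfl hX
  have hlast : p (3 * n) :=
    (hpk _).2 ⟨by omega, B, by simp, ((isKrewerasWord_iff_letterHeight.1 hw).2 B (by simp)).2⟩
  obtain ⟨i, hi⟩ := Option.isSome_iff_exists.1 <| List.find?_isSome.2
    ⟨3 * n, List.mem_range.2 (Nat.lt_succ_of_le hw.1.ge), hlast⟩
  have hkiota : kiota w = i := by
    rw [kiota, List.headD_eq_head?_getD, List.head?_filter, hi, Option.getD_some]
  obtain ⟨hpi, -, hmin⟩ := List.find?_range_eq_some.1 hi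
  rw [hkiota]
  refine ⟨(hpk i).1 hpi, fun k hk ↦ ?_⟩
  by_contra! hki
  simpa [(hpk k).2 hk] using hmin k hki

theorem kiota_le (hw : IsKrewerasWord n w) (hn : 0 < n) : kiota w ≤ 3 * n :=
  (hw.isLeast_kiota hn).2
    ⟨by omega, B, by simp, ((isKrewerasWord_iff_letterHeight.1 hw).2 B (by simp)).2⟩

theorem letterHeight_nonneg (hw : IsKrewerasWord n w) (hX : X ≠ A) (hk : k ≤ 3 * n) :
    0 ≤ letterHeight X w k :=
  ((isKrewerasWord_iff_letterHeight.1 hw).2 X hX).1 k hk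

theorem letterHeight_eq_zero (hw : IsKrewerasWord n w) (hX : X ≠ A) :
    letterHeight X w (3 * n) = 0 :=
  ((isKrewerasWord_iff_letterHeight.1 hw).2 X hX).2

theorem letterHeight_pos (hw : IsKrewerasWord n w) (hn : 0 < n) (hX : X ≠ A) (hk : 0 < k)
    (hlt : k < kiota w) : 0 < letterHeight X w k := by
  have hle := hw.kiota_le hn
  refine (hw.letterHeight_nonneg hX (by omega)).lt_of_ne fun h ↦ hlt.not_ge ?_
  exact (hw.isLeast_kiota hn).2 ⟨hk, X, hX, h.symm⟩

theorem getD_zero (hw : IsKrewerasWord n w) (hn : 0 < n) : w.getD 0 A = A := by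
  by_contra hl
  have hpos := hw.letterHeight_nonneg (k := 1) hl (by omega)
  rw [letterHeight_succ (by have := hw.1; omega), letterHeight_zero, letterStep_self hl] at hpos
  omega

theorem letterHeight_one (hw : IsKrewerasWord n w) (hn : 0 < n) (hX : X ≠ A) :
    letterHeight X w 1 = 1 := by
  rw [letterHeight_succ (by have := hw.1; omega), hw.getD_zero hn, letterHeight_zero,
    letterStep_A hX, zero_add]

theorem one_lt_kiota (hw : IsKrewerasWord n w) (hn : 0 < n) : 1 < kiota w := by
  obtain ⟨⟨hpos, X, hX, h0⟩, -⟩ := hw.isLeast_kiota hn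
  refine hpos.lt_of_ne fun h1 ↦ ?_
  rw [← h1, hw.letterHeight_one hn hX] at h0
  exact one_ne_zero h0

theorem letterHeight_kiota (hw : IsKrewerasWord n w) (hn : 0 < n) (X : KLetter) :
    letterHeight X w (kiota w) = letterHeight X w (kiota w - 1) + letterStep X (keps w 1) := by
  have hlt := hw.one_lt_kiota hn
  have hle := hw.kiota_le hn
  obtain ⟨k, hk⟩ : ∃ k, kiota w = k + 1 := ⟨kiota w - 1, by omega⟩
  simp only [keps, Nat.sub_self, Function.iterate_zero, id_eq, hk, Nat.add_sub_cancel]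
  exact letterHeight_succ (by have := hw.1; omega)

theorem keps_one (hw : IsKrewerasWord n w) (hn : 0 < n) :
    keps w 1 ≠ A ∧ letterHeight (keps w 1) w (kiota w) = 0 := by
  have hlt := hw.one_lt_kiota hn
  obtain ⟨⟨-, X, hX, h0⟩, -⟩ := hw.isLeast_kiota hn
  have hpos := hw.letterHeight_pos hn hX (k := kiota w - 1) (by omega) (by omega)
  have hstep := hw.letterHeight_kiota hn X
  have : keps w 1 = X := by
    by_contra hne
    rw [h0, letterStep, if_neg hne] at hstep
    split_ifs at hstep <;> omega
  rw [this]
  exact ⟨hX, h0⟩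

end IsKrewerasWord
end FirstReturn

section Promotion
variable {X : KLetter} {w : List KLetter} {n k : ℕ}

namespace IsKrewerasWord

theorem length_pro (hw : IsKrewerasWord n w) (hn : 0 < n) : (pro w).length = 3 * n := by
  have := hw.1
  simp only [pro, List.length_append, List.length_set, List.length_drop, List.length_singleton]
  omega

theorem getD_pro_of_lt (hw : IsKrewerasWord n w) (hn : 0 < n) (hk : k + 1 < 3 * n) :
    (pro w).getD k A = if k + 2 = kiota w then A else w.getD (k + 1) A := by
  have hlen := hw.1
  have hlt := hw.one_lt_kiota hn
  rw [pro, List.getD_append _ _ _ _ (by rw [List.length_set, List.length_drop]; omega),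
    List.getD_eq_getElem?_getD, List.getD_eq_getElem?_getD, List.getElem?_set]
  split_ifs <;> first | omega | simp

theorem getD_pro_last (hw : IsKrewerasWord n w) :
    (pro w).getD (3 * n - 1) A = keps w 1 := by
  rw [pro, List.getD_append_right _ _ _ _ (by simp [hw.1])]
  simp [keps, hw.1]

theorem letterHeight_pro_of_lt (hw : IsKrewerasWord n w) (hn : 0 < n) (hX : X ≠ A)
    (hk : k + 1 < kiota w) : letterHeight X (pro w) k = letterHeight X w (k + 1) - 1 := by
  have hle := hw.kiota_le hn
  induction k with
  | zero => simp [hw.letterHeight_one hn hX]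
  | succ k ih =>
    rw [letterHeight_succ (by rw [hw.length_pro hn]; omega), ih (by omega),
      hw.getD_pro_of_lt hn (by omega), if_neg (by omega),
      letterHeight_succ (k := k + 1) (by rw [hw.1]; omega)]
    ring

theorem letterHeight_pro_of_ge (hw : IsKrewerasWord n w) (hn : 0 < n) (hX : X ≠ A)
    (hk : kiota w ≤ k + 1) (hle : k + 1 ≤ 3 * n) :
    letterHeight X (pro w) k = letterHeight X w (k + 1) - letterStep X (keps w 1) := by
  have hlt := hw.one_lt_kiota hn
  induction k with
  | zero => omega
  | succ k ih =>
    rw [letterHeight_succ (by rw [hw.length_pro hn]; omega), hw.getD_pro_of_lt hn (by omega)]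
    rcases hk.eq_or_lt with hk | hk
    · have := hw.letterHeight_kiota hn X
      rw [hk] at this
      rw [hw.letterHeight_pro_of_lt hn hX (by omega), if_pos hk.symm, letterStep_A hX, this,
        Nat.add_sub_cancel]
      ring
    · rw [ih (by omega) (by omega), if_neg (by omega),
        letterHeight_succ (k := k + 1) (by rw [hw.1]; omega)]
      ring

theorem letterHeight_pro_last (hw : IsKrewerasWord n w) (hn : 0 < n) (hX : X ≠ A) :
    letterHeight X (pro w) (3 * n) = 0 := by
  have hle := hw.kiota_le hn
  obtain ⟨k, hk⟩ : ∃ k, 3 * n = k + 1 := ⟨3 * n - 1, by omega⟩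
  have hlast := hw.getD_pro_last
  have hzero := hw.letterHeight_eq_zero hX
  rw [hk] at hle hlast hzero ⊢
  rw [letterHeight_succ (by rw [hw.length_pro hn]; omega), ← Nat.add_sub_cancel k 1, hlast,
    Nat.add_sub_cancel, hw.letterHeight_pro_of_ge hn hX hle hk.ge, hzero]
  ring

protected theorem pro (hw : IsKrewerasWord n w) (hn : 0 < n) : IsKrewerasWord n (pro w) := by
  refine isKrewerasWord_iff_letterHeight.2 ⟨hw.length_pro hn, fun X hX ↦
    ⟨fun k hk ↦ ?_, hw.letterHeight_pro_last hn hX⟩⟩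
  rcases hk.eq_or_lt with rfl | hk
  · exact (hw.letterHeight_pro_last hn hX).ge
  rcases lt_or_ge (k + 1) (kiota w) with hlt | hge
  · have := hw.letterHeight_pos hn hX (k := k + 1) (by omega) hlt
    rw [hw.letterHeight_pro_of_lt hn hX hlt]
    omega
  · have := hw.letterHeight_nonneg hX (k := k + 1) (by omega)
    have := letterStep_nonpos (Y := X) (hw.keps_one hn).1
    rw [hw.letterHeight_pro_of_ge hn hX hge (by omega)]
    omega

theorem pro_iterate (hw : IsKrewerasWord n w) (hn : 0 < n) (t : ℕ) :
    IsKrewerasWord n (pro^[t] w) := by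
  induction t with
  | zero => exact hw
  | succ t ih => rw [Function.iterate_succ_apply']; exact ih.pro hn

end IsKrewerasWord
end Promotion

section Rows

open BumpDiagram

/-- The position bumped by the promotion of `pro^[t] w`, when row `t` of the promotions of `w` is
placed on the positions `t + 1, …, t + 3n`. It is a representative of `σ_w(t + 1)` modulo `3n`. -/
def bumpPosition (w : List KLetter) (t : ℕ) : ℕ := t + kiota (pro^[t] w)

/-- The height of row `t` with respect to `X` at the absolute position `k ≥ t`. -/
def rowHeight (w : List KLetter) (X : KLetter) (t k : ℕ) : ℤ := letterHeight X (pro^[t] w) (k - t)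

/-- The letter of row `t` at the absolute, `1`-indexed position `k > t`. -/
def rowLetter (w : List KLetter) (t k : ℕ) : KLetter := (pro^[t] w).getD (k - 1 - t) A

/-- The trip from `s` to `e` in the bump diagram of row `t`. -/
def RowTrip (n : ℕ) (w : List KLetter) (t s e : ℕ) : Prop :=
  Trip t (t + 3 * n) (rowHeight w B t) (rowHeight w C t) s e

theorem rowTrip_iff {X : KLetter} {w : List KLetter} {n t s e : ℕ} (hX : X ≠ A) :
    RowTrip n w t s e ↔
      Trip t (t + 3 * n) (rowHeight w X t) (rowHeight w (negL X) t) s e := by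
  cases X
  exacts [absurd rfl hX, Iff.rfl, ⟨Trip.symm, Trip.symm⟩]

namespace IsKrewerasWord
variable {X : KLetter} {w : List KLetter} {n t t' s e k : ℕ}

theorem lt_bumpPosition (hw : IsKrewerasWord n w) (hn : 0 < n) (t : ℕ) :
    t + 1 < bumpPosition w t := by
  have := (hw.pro_iterate hn t).one_lt_kiota hn
  rw [bumpPosition]
  omega

theorem bumpPosition_le (hw : IsKrewerasWord n w) (hn : 0 < n) (t : ℕ) :
    bumpPosition w t ≤ t + 3 * n :=
  Nat.add_le_add_left ((hw.pro_iterate hn t).kiota_le hn) t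

theorem rowLetter_first (hw : IsKrewerasWord n w) (hn : 0 < n) (t : ℕ) :
    rowLetter w t (t + 1) = A := by
  simpa [rowLetter] using (hw.pro_iterate hn t).getD_zero hn

theorem rowLetter_succ (hw : IsKrewerasWord n w) (hn : 0 < n) (hlt : t + 1 < k)
    (hle : k ≤ t + 3 * n) :
    rowLetter w (t + 1) k = if k = bumpPosition w t then A else rowLetter w t k := by
  obtain ⟨m, rfl⟩ : ∃ m, k = t + (m + 2) := ⟨k - t - 2, by omega⟩
  rw [rowLetter, rowLetter, Function.iterate_succ_apply',
    show t + (m + 2) - 1 - (t + 1) = m by omega, show t + (m + 2) - 1 - t = m + 1 by omega,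
    (hw.pro_iterate hn t).getD_pro_of_lt hn (by omega)]
  simp only [bumpPosition, Nat.add_left_cancel_iff]

theorem rowLetter_bumpPosition_ne (hw : IsKrewerasWord n w) (hn : 0 < n) (t : ℕ) :
    rowLetter w t (bumpPosition w t) ≠ A := by
  rw [rowLetter, bumpPosition, show t + kiota (pro^[t] w) - 1 - t = kiota (pro^[t] w) - 1 by omega]
  exact ((hw.pro_iterate hn t).keps_one hn).1

theorem rowLetter_eq_A_of_le (hw : IsKrewerasWord n w) (hn : 0 < n) (hA : rowLetter w t k = A)
    (hk : k ≤ t + 3 * n) (ht : t ≤ t') (hlt : t' < k) : rowLetter w t' k = A := by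
  induction t', ht using Nat.le_induction with
  | base => exact hA
  | succ t' _ ih =>
    rw [hw.rowLetter_succ hn hlt (by omega), ih (by omega), ite_self]

theorem bumpPosition_ne_of_lt (hw : IsKrewerasWord n w) (hn : 0 < n) (h : t < t') :
    bumpPosition w t ≠ bumpPosition w t' := by
  intro heq
  have hlt := hw.lt_bumpPosition hn t'
  have hle := hw.bumpPosition_le hn t
  refine hw.rowLetter_bumpPosition_ne hn t' (hw.rowLetter_eq_A_of_le hn (t := t + 1) ?_ ?_ h ?_)
  · rw [hw.rowLetter_succ hn (by omega) (by omega), if_pos heq.symm]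
  all_goals omega

theorem bumpPosition_injective (hw : IsKrewerasWord n w) (hn : 0 < n) :
    Function.Injective (bumpPosition w) :=
  Function.Injective.of_lt_imp_ne fun _ _ ↦ hw.bumpPosition_ne_of_lt hn

theorem exists_bumpPosition_eq (hw : IsKrewerasWord n w) (hn : 0 < n) (hk : 0 < k) (hle : k ≤ 3 * n)
    (h : rowLetter w 0 k ≠ A) : ∃ t, bumpPosition w t = k := by
  by_contra! hne
  have hconst : ∀ t < k, rowLetter w t k = rowLetter w 0 k := fun t ht ↦ by
    induction t with
    | zero => rfl
    | succ t ih =>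
      rw [hw.rowLetter_succ hn ht (by omega), if_neg (hne t).symm, ih (by omega)]
  obtain ⟨t, rfl⟩ : ∃ t, k = t + 1 := ⟨k - 1, by omega⟩
  exact h (hconst t t.lt_succ_self ▸ hw.rowLetter_first hn t)

theorem isPromotionStep (hw : IsKrewerasWord n w) (hn : 0 < n) :
    IsPromotionStep 0 (3 * n) (kiota w)
      (letterHeight (keps w 1) w) (letterHeight (negL (keps w 1)) w)
      (fun k ↦ letterHeight (keps w 1) (pro w) (k - 1))
      (fun k ↦ letterHeight (negL (keps w 1)) (pro w) (k - 1)) := by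
  obtain ⟨hX, hzero⟩ := hw.keps_one hn
  have hY := negL_ne_A hX
  have hbump := hw.letterHeight_kiota hn (keps w 1)
  have hbump' := hw.letterHeight_kiota hn (negL (keps w 1))
  rw [letterStep_self hX] at hbump
  rw [letterStep_negL] at hbump'
  have hbefore : ∀ Z ≠ A, ∀ m, 0 < m → m < kiota w →
      letterHeight Z (pro w) (m - 1) = letterHeight Z w m - 1 := fun Z hZ m hm hlt ↦ by
    rw [hw.letterHeight_pro_of_lt hn hZ (by omega), Nat.sub_add_cancel hm]
  have hafter : ∀ Z ≠ A, ∀ m, kiota w ≤ m → m ≤ 3 * n → letterHeight Z (pro w) (m - 1) =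
      letterHeight Z w m - letterStep Z (keps w 1) := fun Z hZ m hm hle ↦ by
    have := hw.one_lt_kiota hn
    rw [hw.letterHeight_pro_of_ge hn hZ (by omega) (by omega), Nat.sub_add_cancel (by omega)]
  exact
  { lo_lt := hw.one_lt_kiota hn
    le_hi := hw.kiota_le hn
    start := ⟨letterHeight_zero, letterHeight_zero⟩
    first := ⟨hw.letterHeight_one hn hX, hw.letterHeight_one hn hY⟩
    finish := ⟨hw.letterHeight_eq_zero hX, hw.letterHeight_eq_zero hY⟩
    nonneg := fun m _ hm ↦ ⟨hw.letterHeight_nonneg hX hm, hw.letterHeight_nonneg hY hm⟩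
    pos := fun m hm hlt ↦ ⟨hw.letterHeight_pos hn hX hm hlt, hw.letterHeight_pos hn hY hm hlt⟩
    bump := ⟨by omega, hzero, by omega⟩
    before := fun m hm hlt ↦ ⟨hbefore _ hX m hm hlt, hbefore _ hY m hm hlt⟩
    after := fun m hm hle ↦ ⟨by simpa [letterStep_self hX] using hafter _ hX m hm hle,
      by simpa [letterStep_negL] using hafter _ hY m hm hle⟩
    finish' := ⟨hw.letterHeight_pro_last hn hX, hw.letterHeight_pro_last hn hY⟩ }

theorem isPromotionStep_row (hw : IsKrewerasWord n w) (hn : 0 < n) (t : ℕ) :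
    IsPromotionStep t (t + 3 * n) (bumpPosition w t)
      (rowHeight w (keps w (t + 1)) t) (rowHeight w (negL (keps w (t + 1))) t)
      (rowHeight w (keps w (t + 1)) (t + 1)) (rowHeight w (negL (keps w (t + 1))) (t + 1)) := by
  have hsucc : ∀ Z, rowHeight w Z (t + 1) =
      fun k ↦ letterHeight Z (pro (pro^[t] w)) (k - t - 1) := fun Z ↦ by
    funext k
    rw [rowHeight, Function.iterate_succ_apply', Nat.sub_sub]
  rw [hsucc, hsucc]
  exact ((hw.pro_iterate hn t).isPromotionStep hn).shift t

theorem rowTrip_succ (hw : IsKrewerasWord n w) (hn : 0 < n) (hlt : t + 1 < s)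
    (hle : s ≤ t + 3 * n) (h : RowTrip n w t s e) :
    ∃ e', RowTrip n w (t + 1) s e' ∧ (e' = e ∨ e = t + 1 ∧ e' = t + 3 * n + 1) := by
  have hX := ((hw.pro_iterate hn t).keps_one hn).1
  obtain ⟨e', h', he'⟩ := (hw.isPromotionStep_row hn t).trip hlt hle ((rowTrip_iff hX).1 h)
  rw [add_right_comm] at h'
  exact ⟨e', (rowTrip_iff hX).2 h', he'⟩

theorem rowTrip_appended (hw : IsKrewerasWord n w) (hn : 0 < n) (t : ℕ) :
    RowTrip n w (t + 1) (t + 3 * n + 1) (bumpPosition w t) := by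
  have hX := ((hw.pro_iterate hn t).keps_one hn).1
  rw [rowTrip_iff hX, add_right_comm]
  exact (hw.isPromotionStep_row hn t).trip_appended

theorem eq_bumpPosition_of_rowTrip (hw : IsKrewerasWord n w) (hn : 0 < n)
    (h : RowTrip n w t (t + 1) e) : e = bumpPosition w t :=
  (hw.isPromotionStep_row hn t).eq_bump_of_trip_first
    ((rowTrip_iff ((hw.pro_iterate hn t).keps_one hn).1).1 h)

theorem exists_rowTrip (hw : IsKrewerasWord n w) (hn : 0 < n) (hlt : t < t')
    (hle : t' ≤ t + 3 * n) :
    ∃ e, RowTrip n w t' (t + 3 * n + 1) e ∧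
      (e = bumpPosition w t ∨ e = bumpPosition w t + 3 * n) := by
  induction t', hlt using Nat.le_induction with
  | base => exact ⟨_, hw.rowTrip_appended hn t, Or.inl rfl⟩
  | succ t' _ ih =>
    obtain ⟨e, h, he⟩ := ih (by omega)
    obtain ⟨e', h', he'⟩ := hw.rowTrip_succ hn (by omega) (by omega) h
    have := hw.lt_bumpPosition hn t
    exact ⟨e', h', by omega⟩

theorem bumpPosition_add_period (hw : IsKrewerasWord n w) (hn : 0 < n) (t : ℕ) :
    bumpPosition w (t + 3 * n) = bumpPosition w t + 3 * n := by
  obtain ⟨e, h, he⟩ := hw.exists_rowTrip hn (t := t) (t' := t + 3 * n) (by omega) le_rfl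
  obtain rfl := hw.eq_bumpPosition_of_rowTrip hn h
  have := hw.lt_bumpPosition hn (t + 3 * n)
  have := hw.bumpPosition_le hn t
  omega

theorem rowLetter_zero_eq_A (hw : IsKrewerasWord n w) (hn : 0 < n) (ht : t < 3 * n) (hs : 0 < s)
    (hbump : bumpPosition w t = s + 3 * n) : rowLetter w 0 s = A := by
  by_contra hne
  have hle := hw.bumpPosition_le hn t
  obtain ⟨t', rfl⟩ := hw.exists_bumpPosition_eq hn hs (by omega) hne
  have := hw.bumpPosition_injective hn (hbump.trans (hw.bumpPosition_add_period hn t').symm)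
  omega

theorem rowLetter_zero_bumpPosition_ne (hw : IsKrewerasWord n w) (hn : 0 < n)
    (hle : bumpPosition w t ≤ 3 * n) : rowLetter w 0 (bumpPosition w t) ≠ A := fun h ↦
  have := hw.lt_bumpPosition hn t
  hw.rowLetter_bumpPosition_ne hn t (hw.rowLetter_eq_A_of_le hn h (by omega) t.zero_le (by omega))

end IsKrewerasWord

end Rows

theorem ksigma_succ (n : ℕ) (w : List KLetter) (t : ℕ) :
    ksigma n w (t + 1) = (bumpPosition w t - 1) % (3 * n) + 1 := by
  rw [ksigma, bumpPosition, Nat.add_sub_cancel, show kiota (pro^[t] w) + (t + 1) - 2 =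
    t + kiota (pro^[t] w) - 1 by omega]

/-- For every `j ∈ {1, …, 3n}`: `w_{σ_w(j)} = A` if and only if `σ_w(j) < j`;
in particular `σ_w` has no fixed points (letters are 1-indexed).  Equivalently,
`{i : w_i = A} = {i : σ_w⁻¹(i) > i}` and `{i : w_i ∈ {B, C}} = {i : σ_w⁻¹(i) < i}`. -/
theorem ksigma_antiexceedances (n : ℕ) (w : List KLetter) (hw : IsKrewerasWord n w) :
    ∀ j : ℕ, 1 ≤ j → j ≤ 3 * n →
      ((w.getD (ksigma n w j - 1) KLetter.A = KLetter.A ↔ ksigma n w j < j) ∧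
        ksigma n w j ≠ j) := by
  intro j hj1 hj
  have hn : 0 < n := by omega
  obtain ⟨t, rfl⟩ : ∃ t, j = t + 1 := ⟨j - 1, by omega⟩
  have hlt := hw.lt_bumpPosition hn t
  have hle := hw.bumpPosition_le hn t
  have hsigma := ksigma_succ n w t
  change (rowLetter w 0 (ksigma n w (t + 1)) = A ↔ _) ∧ _
  rcases le_or_gt (bumpPosition w t) (3 * n) with hwrap | hwrap
  · rw [Nat.mod_eq_of_lt (by omega), Nat.sub_add_cancel (by omega)] at hsigma
    have := hw.rowLetter_zero_bumpPosition_ne hn hwrap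
    rw [hsigma]
    exact ⟨iff_of_false this (by omega), by omega⟩
  · obtain ⟨s, hs⟩ : ∃ s, bumpPosition w t = s + 1 + 3 * n :=
      ⟨bumpPosition w t - 3 * n - 1, by omega⟩
    rw [hs, show s + 1 + 3 * n - 1 = s + 3 * n by omega, Nat.add_mod_right,
      Nat.mod_eq_of_lt (by omega)] at hsigma
    rw [hsigma]
    exact ⟨iff_of_true (hw.rowLetter_zero_eq_A hn (by omega) s.succ_pos hs) (by omega),
      by omega⟩
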